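/- arXiv:math-ph/0304042 — 2 statements merged into one kernel-verified Lean document; each statement's English description precedes it below -/
import Mathlib

section
/- The subgroup of the automorphism group of K = ℂ(α₀,α₁,α₂,φ₀,φ₁,φ₂) generated by s₀, s₁, s₂ is isomorphic to the affine Weyl group W(A₂⁽¹⁾), i.e. to the Coxeter group with generators s₀, s₁, s₂ and defining relations sᵢ² = 1 and (sᵢsⱼ)³ = 1 for i ≠ j; in particular the realization is faithful. -/
/-!
Faithfulness of the birational realization: the group of automorphisms of
K = ℂ(α₀,α₁,α₂,φ₀,φ₁,φ₂) generated by the Bäcklund transformations s₀, s₁, s₂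
is isomorphic to the affine Weyl group W(A₂⁽¹⁾), presented by generators
s₀, s₁, s₂ with relations sᵢ² = 1 and (sᵢsⱼ)³ = 1 for i ≠ j.
-/

open MvPolynomial

noncomputable section

abbrev PolyP4 := MvPolynomial (ZMod 3 ⊕ ZMod 3) ℂ

abbrev KP4 := FractionRing PolyP4

/-- The parameter variables α₀, α₁, α₂. -/
def αv (j : ZMod 3) : KP4 := algebraMap PolyP4 KP4 (X (Sum.inl j))

/-- The unknown variables φ₀, φ₁, φ₂. -/
def φv (j : ZMod 3) : KP4 := algebraMap PolyP4 KP4 (X (Sum.inr j))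

/-- The Cartan matrix of type A₂⁽¹⁾: aᵢᵢ = 2, aᵢⱼ = −1 for i ≠ j. -/
def cartanA2 (i j : ZMod 3) : ℤ := if i = j then 2 else -1

/-- The orientation matrix of the triangle: uᵢᵢ = 0, u_{i,i+1} = 1, u_{i,i+2} = −1. -/
def orientA2 (i j : ZMod 3) : ℤ := if j = i then 0 else if j = i + 1 then 1 else -1

/-- Defining relators of the affine Weyl group W(A₂⁽¹⁾): sᵢ² and (sᵢsⱼ)³ for i ≠ j. -/
def weylA2Rels : Set (FreeGroup (ZMod 3)) :=
  {w | ∃ i : ZMod 3, w = FreeGroup.of i * FreeGroup.of i} ∪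
  {w | ∃ i j : ZMod 3, i ≠ j ∧ w = (FreeGroup.of i * FreeGroup.of j) ^ 3}

/-- The affine Weyl group W(A₂⁽¹⁾) as an abstract Coxeter group, given by its
presentation. -/
abbrev WeylA2 := PresentedGroup weylA2Rels

/-!
The action on the span of the `αⱼ` is already faithful. In the Coxeter group the elements
`τᵢ = sᵢ₊₁ sᵢ₊₂ sᵢ₊₁ sᵢ` commute and generate a normal subgroup, so every element is `τ₁ᵐ τ₂ⁿ w`
with `w ∈ ⟨s₁, s₂⟩`, a group of at most six elements. Put `δ = α₀ + α₁ + α₂`, which is fixed by all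
`sᵢ`. Then `τᵢ` is the translation `αⱼ ↦ αⱼ - aᵢⱼ δ`, while `w` preserves the span of `α₁` and `α₂`,
which does not contain `δ`. Hence if `τ₁ᵐ τ₂ⁿ w` acts trivially, so do the translation and `w`
separately, which forces `w = 1` and `m = n = 0`.

The braid relation of `sᵢ` and `sᵢ₊₁` holds on the `φⱼ`: since `φ₀ + φ₁ + φ₂` is invariant, only
`φᵢ` and `φᵢ₊₁` are to be treated, and `(φᵢ, φᵢ₊₁) ↦ (φᵢ₊₁, -φᵢ)` exchanges these two cases.
-/

section ZModThree

theorem eq_or_eq_add_one_or_eq_add_two (i j : ZMod 3) : j = i ∨ j = i + 1 ∨ j = i + 2 := by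
  revert i j; decide

theorem exists_ne_and_ne {i j : ZMod 3} (hij : i ≠ j) :
    ∃ k, i ≠ k ∧ j ≠ k ∧ ∀ l, l = i ∨ l = j ∨ l = k := by
  revert i j; decide

theorem range_zmod_three {X : Type*} (f : ZMod 3 → X) : Set.range f = {f 0, f 1, f 2} := by
  ext x
  refine ⟨?_, ?_⟩
  · rintro ⟨i, rfl⟩
    rcases eq_or_eq_add_one_or_eq_add_two 0 i with rfl | rfl | rfl <;> simp
  · rintro (rfl | rfl | rfl) <;> exact ⟨_, rfl⟩

theorem sum_zmod_three {A : Type*} [AddCommMonoid A] (f : ZMod 3 → A) (i : ZMod 3) :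
    ∑ j, f j = f i + f (i + 1) + f (i + 2) := by
  have univ_eq : (Finset.univ : Finset (ZMod 3)) = {i, i + 1, i + 2} := by revert i; decide
  rw [univ_eq, Finset.sum_insert (by revert i; decide), Finset.sum_pair (by revert i; decide),
    add_assoc]

theorem sum_cartanA2 (i : ZMod 3) : ∑ j, cartanA2 i j = 0 := by
  revert i; decide

theorem cartanA2_add_add (i j : ZMod 3) :
    cartanA2 i j + cartanA2 (i + 1) j + cartanA2 (i + 2) j = 0 := by
  revert i j; decide

theorem sum_orientA2 (i : ZMod 3) : ∑ j, orientA2 i j = 0 := by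
  revert i; decide

end ZModThree

section Involutions

variable {G : Type*} [Group G] {x y : G}

theorem mul_pow_three_eq_one_iff_braid (hx : x * x = 1) (hy : y * y = 1) :
    (x * y) ^ 3 = 1 ↔ x * y * x = y * x * y := by
  have inv_yxy : (y * x * y)⁻¹ = y * x * y := by
    rw [mul_inv_rev, mul_inv_rev, inv_eq_of_mul_eq_one_left hx, inv_eq_of_mul_eq_one_left hy,
      mul_assoc]
  calc (x * y) ^ 3 = 1 ↔ x * y * x * (y * x * y) = 1 := by
        simp only [pow_succ, pow_zero, one_mul, mul_assoc]
    _ ↔ x * y * x = y * x * y := by rw [mul_eq_one_iff_eq_inv, inv_yxy]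

theorem closure_induction_left_of_involutions {S : Set G} (hS : ∀ x ∈ S, x * x = 1)
    {P : G → Prop} (one : P 1) (mul_left : ∀ x ∈ S, ∀ g, P g → P (x * g)) {g : G}
    (hg : g ∈ Subgroup.closure S) : P g := by
  induction hg using Subgroup.closure_induction_left with
  | one => exact one
  | mul_left x hx g _ ih => exact mul_left x hx g ih
  | inv_mul_cancel x hx g _ ih =>
    rw [inv_eq_of_mul_eq_one_left (hS x hx)]
    exact mul_left x hx g ih

theorem mem_closure_pair_of_braid (hx : x * x = 1) (hy : y * y = 1)
    (hxy : x * y * x = y * x * y) {w : G} (hw : w ∈ Subgroup.closure {x, y}) :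
    w = 1 ∨ w = x ∨ w = y ∨ w = x * y ∨ w = y * x ∨ w = x * y * x := by
  have hx' (g : G) : x * (x * g) = g := by rw [← mul_assoc, hx, one_mul]
  have hy' (g : G) : y * (y * g) = g := by rw [← mul_assoc, hy, one_mul]
  have hyxy : y * (x * y) = x * (y * x) := by rw [← mul_assoc, ← hxy, mul_assoc]
  have hyxyx : y * (x * (y * x)) = x * y := by rw [← hyxy, hy']
  refine closure_induction_left_of_involutions (S := {x, y})
    (P := fun w ↦ w = 1 ∨ w = x ∨ w = y ∨ w = x * y ∨ w = y * x ∨ w = x * y * x)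
    (by simp [hx, hy]) (Or.inl rfl) ?_ hw
  rintro z (rfl | rfl) g (rfl | rfl | rfl | rfl | rfl | rfl) <;>
    simp [mul_assoc, hx, hy, hx', hy', hyxy, hyxyx]

end Involutions

/-- The family `r` satisfies the Coxeter relations of type `A₂⁽¹⁾`, with `(rᵢ rⱼ)³ = 1` replaced by
the braid relation, which is equivalent to it for involutions. -/
structure IsWeylA2Family {G : Type*} [Group G] (r : ZMod 3 → G) : Prop where
  mul_self (i : ZMod 3) : r i * r i = 1
  braid {i j : ZMod 3} : i ≠ j → r i * r j * r i = r j * r i * r j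

/-- The element `τᵢ = rᵢ₊₁ rᵢ₊₂ rᵢ₊₁ rᵢ`. In the affine Weyl group it is the translation by the root
`αᵢ`: the product of the reflections in `δ - αᵢ` and in `αᵢ`. -/
def weylTranslation {G : Type*} [Group G] (r : ZMod 3 → G) (i : ZMod 3) : G :=
  r (i + 1) * r (i + 2) * r (i + 1) * r i

theorem isWeylA2Family_iff_lift {G : Type*} [Group G] {r : ZMod 3 → G} :
    IsWeylA2Family r ↔ ∀ w ∈ weylA2Rels, FreeGroup.lift r w = 1 := by
  constructor
  · rintro h _ (⟨i, rfl⟩ | ⟨i, j, hij, rfl⟩)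
    · simpa using h.mul_self i
    · simpa using
        (mul_pow_three_eq_one_iff_braid (h.mul_self i) (h.mul_self j)).2 (h.braid hij)
  · intro h
    have mul_self (i : ZMod 3) : r i * r i = 1 := by simpa using h _ (Or.inl ⟨i, rfl⟩)
    refine ⟨mul_self, fun {i j} hij ↦ ?_⟩
    exact (mul_pow_three_eq_one_iff_braid (mul_self i) (mul_self j)).1
      (by simpa using h _ (Or.inr ⟨i, j, hij, rfl⟩))

theorem isWeylA2Family_of : IsWeylA2Family (PresentedGroup.of : ZMod 3 → WeylA2) := by
  refine isWeylA2Family_iff_lift.2 fun w hw ↦ ?_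
  have lift_of : FreeGroup.lift (PresentedGroup.of : ZMod 3 → WeylA2) =
      PresentedGroup.mk weylA2Rels := by
    ext i; simp [PresentedGroup.of]
  rw [lift_of]
  exact PresentedGroup.one_of_mem hw

theorem range_toGroup {ι G : Type*} [Group G] {rels : Set (FreeGroup ι)} {r : ι → G}
    (h : ∀ w ∈ rels, FreeGroup.lift r w = 1) :
    (PresentedGroup.toGroup h).range = Subgroup.closure (Set.range r) := by
  rw [MonoidHom.range_eq_map, ← PresentedGroup.closure_range_of, MonoidHom.map_closure,
    ← Set.range_comp]
  congr 2
  ext i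
  exact PresentedGroup.toGroup.of h

namespace IsWeylA2Family

variable {G : Type*} [Group G] {r : ZMod 3 → G}

theorem mul_cancel_left (h : IsWeylA2Family r) (i : ZMod 3) (g : G) : r i * (r i * g) = g := by
  rw [← mul_assoc, h.mul_self, one_mul]

theorem inv_eq (h : IsWeylA2Family r) (i : ZMod 3) : (r i)⁻¹ = r i :=
  inv_eq_of_mul_eq_one_left (h.mul_self i)

theorem weylTranslation_eq (h : IsWeylA2Family r) {i j k : ZMod 3} (hij : i ≠ j) (hik : i ≠ k)
    (hjk : j ≠ k) : weylTranslation r i = r j * r k * r j * r i := by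
  have : (j = i + 1 ∧ k = i + 2) ∨ (j = i + 2 ∧ k = i + 1) := by revert i j k; decide
  obtain ⟨rfl, rfl⟩ | ⟨rfl, rfl⟩ := this
  · rfl
  · rw [weylTranslation, h.braid hjk]

theorem weylTranslation_mul (h : IsWeylA2Family r) {i j k : ZMod 3} (hij : i ≠ j) (hik : i ≠ k)
    (hjk : j ≠ k) :
    weylTranslation r i * weylTranslation r j = r k * (r i * r j * r i) := by
  calc weylTranslation r i * weylTranslation r j
      = r j * r k * r j * r i * (r i * r k * r i * r j) := by
        rw [h.weylTranslation_eq hij hik hjk, h.weylTranslation_eq hij.symm hjk hik]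
    _ = r j * r k * r j * (r k * r i * r j) := by simp only [mul_assoc, h.mul_cancel_left]
    _ = r k * r j * r k * (r k * r i * r j) := by rw [h.braid hjk]
    _ = r k * (r j * r i * r j) := by simp only [mul_assoc, h.mul_cancel_left]
    _ = r k * (r i * r j * r i) := by rw [h.braid hij]

theorem commute_weylTranslation (h : IsWeylA2Family r) {i j : ZMod 3} (hij : i ≠ j) :
    Commute (weylTranslation r i) (weylTranslation r j) := by
  obtain ⟨k, hik, hjk, -⟩ := exists_ne_and_ne hij
  rw [Commute, SemiconjBy, h.weylTranslation_mul hij hik hjk,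
    h.weylTranslation_mul hij.symm hjk hik, h.braid hij]

theorem semiconjBy_weylTranslation_self (h : IsWeylA2Family r) (i : ZMod 3) :
    SemiconjBy (r i) (weylTranslation r i) (weylTranslation r i)⁻¹ := by
  simp only [SemiconjBy, weylTranslation, mul_inv_rev, h.inv_eq, mul_assoc]

theorem semiconjBy_weylTranslation_of_ne (h : IsWeylA2Family r) {i j : ZMod 3} (hij : i ≠ j) :
    SemiconjBy (r i) (weylTranslation r j) (weylTranslation r i * weylTranslation r j) := by
  obtain ⟨k, hik, hjk, -⟩ := exists_ne_and_ne hij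
  rw [SemiconjBy, h.weylTranslation_mul hij hik hjk, h.weylTranslation_eq hij.symm hjk hik]
  simp only [mul_assoc, h.mul_cancel_left, h.mul_self, mul_one]

theorem semiconjBy_zpow_mul_zpow (h : IsWeylA2Family r) {i j : ZMod 3} (hij : i ≠ j) (m n : ℤ) :
    SemiconjBy (r i) (weylTranslation r i ^ m * weylTranslation r j ^ n)
      (weylTranslation r i ^ (n - m) * weylTranslation r j ^ n) := by
  have key := ((h.semiconjBy_weylTranslation_self i).zpow_right m).mul_right
    ((h.semiconjBy_weylTranslation_of_ne hij).zpow_right n)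
  rwa [(h.commute_weylTranslation hij).mul_zpow, inv_zpow', ← mul_assoc, ← zpow_add,
    neg_add_eq_sub] at key

theorem mul_eq_weylTranslation_mul (h : IsWeylA2Family r) {i j k : ZMod 3} (hij : i ≠ j)
    (hik : i ≠ k) (hjk : j ≠ k) (g : G) :
    r k * g = weylTranslation r i * weylTranslation r j * (r i * (r j * (r i * g))) := by
  rw [h.weylTranslation_mul hij hik hjk]
  simp only [mul_assoc, h.mul_cancel_left]

theorem exists_eq_zpow_mul_zpow_mul (h : IsWeylA2Family r)
    (hr : Subgroup.closure (Set.range r) = ⊤) {i j : ZMod 3} (hij : i ≠ j) (g : G) :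
    ∃ m n : ℤ, ∃ w ∈ Subgroup.closure {r i, r j},
      g = weylTranslation r i ^ m * weylTranslation r j ^ n * w := by
  let P (g : G) : Prop := ∃ m n : ℤ, ∃ w ∈ Subgroup.closure {r i, r j},
    g = weylTranslation r i ^ m * weylTranslation r j ^ n * w
  obtain ⟨k, hik, hjk, eq_or⟩ := exists_ne_and_ne hij
  have comm := h.commute_weylTranslation hij
  have mul_left_i (g : G) : P g → P (r i * g) := by
    rintro ⟨m, n, w, hw, rfl⟩
    refine ⟨n - m, n, r i * w, mul_mem (Subgroup.subset_closure (by simp)) hw, ?_⟩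
    rw [← mul_assoc, (h.semiconjBy_zpow_mul_zpow hij m n).eq, mul_assoc]
  have mul_left_j (g : G) : P g → P (r j * g) := by
    rintro ⟨m, n, w, hw, rfl⟩
    refine ⟨m, m - n, r j * w, mul_mem (Subgroup.subset_closure (by simp)) hw, ?_⟩
    rw [(comm.zpow_zpow m n).eq, (comm.zpow_zpow m _).eq, ← mul_assoc,
      (h.semiconjBy_zpow_mul_zpow hij.symm n m).eq, mul_assoc]
  have mul_left_k (g : G) (hg : P g) : P (r k * g) := by
    obtain ⟨m, n, w, hw, hg'⟩ := mul_left_i _ (mul_left_j _ (mul_left_i _ hg))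
    refine ⟨1 + m, 1 + n, w, hw, ?_⟩
    rw [h.mul_eq_weylTranslation_mul hij hik hjk, hg', zpow_one_add, zpow_one_add, ← mul_assoc,
      (comm.symm.zpow_right m).mul_mul_mul_comm]
  refine closure_induction_left_of_involutions (S := Set.range r) (P := P)
    (Set.forall_mem_range.2 h.mul_self) ⟨0, 0, 1, one_mem _, by simp⟩
    (Set.forall_mem_range.2 fun l ↦ ?_) (hr ▸ Subgroup.mem_top g)
  obtain rfl | rfl | rfl := eq_or l
  exacts [mul_left_i, mul_left_j, mul_left_k]

end IsWeylA2Family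

theorem zpow_smul_eq_add_zsmul {G M : Type*} [Group G] [AddCommGroup M] [DistribMulAction G M]
    {g : G} {x d : M} (hx : g • x = x + d) (hd : g • d = d) (m : ℤ) :
    g ^ m • x = x + m • d := by
  have hx' : g⁻¹ • x = x - d := by
    rw [inv_smul_eq_iff, smul_sub, hx, hd, add_sub_cancel_right]
  have hd' : g⁻¹ • d = d := by rw [inv_smul_eq_iff, hd]
  induction m with
  | zero => simp
  | succ m ih =>
    rw [add_comm, zpow_one_add, mul_smul, ih, smul_add, smul_comm, hx, hd]
    module
  | pred m ih =>
    rw [sub_eq_neg_add, zpow_add, zpow_neg_one, mul_smul, ih, smul_add, smul_comm, hx', hd']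
    module

theorem coeff_eq_zero_of_add_zsmul_sum {M : Type*} [AddCommGroup M] {α : ZMod 3 → M}
    (hα : LinearIndependent ℤ α) {i j : ZMod 3} (hij : i ≠ j) {a b c : ℤ}
    (habc : a • α i + b • α j + c • ∑ l, α l = 0) : a = 0 ∧ b = 0 ∧ c = 0 := by
  obtain ⟨k, hik, hjk, -⟩ := exists_ne_and_ne hij
  have coeff := Fintype.linearIndependent_iff.1 hα
    (fun l ↦ (if l = i then a else 0) + (if l = j then b else 0) + c)
    (by simpa [add_smul, ite_smul, Finset.sum_add_distrib, ← Finset.smul_sum] using habc)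
  have hc : c = 0 := by simpa [hik.symm, hjk.symm] using coeff k
  exact ⟨by simpa [hij, hc] using coeff i, by simpa [hij.symm, hc] using coeff j, hc⟩

/-- The elements `rᵢ` act on the simple roots `αⱼ` as the simple reflections of type `A₂⁽¹⁾`. -/
def ActsAsReflections {G M : Type*} [Group G] [AddCommGroup M] [DistribMulAction G M]
    (r : ZMod 3 → G) (α : ZMod 3 → M) : Prop :=
  ∀ i j, r i • α j = α j - cartanA2 i j • α i

namespace ActsAsReflections

variable {G M : Type*} [Group G] [AddCommGroup M] [DistribMulAction G M]
  {r : ZMod 3 → G} {α : ZMod 3 → M}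

theorem smul_self (h : ActsAsReflections r α) (i : ZMod 3) : r i • α i = -α i := by
  rw [h, cartanA2, if_pos rfl]; module

theorem smul_of_ne (h : ActsAsReflections r α) {i j : ZMod 3} (hij : i ≠ j) :
    r i • α j = α j + α i := by
  rw [h, cartanA2, if_neg hij]; module

theorem smul_smul_self (h : ActsAsReflections r α) (i k : ZMod 3) : r i • r i • α k = α k := by
  rw [h, smul_sub, smul_comm, h.smul_self, h]; module

theorem smul_smul_smul (h : ActsAsReflections r α) {i j : ZMod 3} (hij : i ≠ j) (k : ZMod 3) :
    r i • r j • r i • α k = α k - (cartanA2 i k + cartanA2 j k) • (α i + α j) := by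
  have smul_root (l m : ZMod 3) (c : ℤ) (x : M) :
      r l • (x - c • α m) = r l • x - c • r l • α m := by
    rw [smul_sub, smul_comm]
  rw [h i k, smul_root, h j k, h.smul_of_ne hij.symm, smul_sub, smul_root, h i k,
    smul_comm (r i) (cartanA2 i k), smul_add, h.smul_self, h.smul_of_ne hij]
  module

theorem smul_braid (h : ActsAsReflections r α) {i j : ZMod 3} (hij : i ≠ j) (k : ZMod 3) :
    r i • r j • r i • α k = r j • r i • r j • α k := by
  rw [h.smul_smul_smul hij, h.smul_smul_smul hij.symm, add_comm (α i), add_comm (cartanA2 i k)]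

theorem smul_sum (h : ActsAsReflections r α) (i : ZMod 3) : r i • ∑ j, α j = ∑ j, α j := by
  rw [Finset.smul_sum]
  simp only [h i, Finset.sum_sub_distrib, ← Finset.sum_smul, sum_cartanA2, zero_smul, sub_zero]

theorem weylTranslation_smul_sum (h : ActsAsReflections r α) (i : ZMod 3) :
    weylTranslation r i • ∑ j, α j = ∑ j, α j := by
  simp only [weylTranslation, mul_smul, h.smul_sum]

theorem weylTranslation_smul (h : ActsAsReflections r α) (i j : ZMod 3) :
    weylTranslation r i • α j = α j - cartanA2 i j • ∑ l, α l := by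
  have ne : i + 1 ≠ i + 2 := by revert i; decide
  have reflection (k : ZMod 3) :
      r (i + 1) • r (i + 2) • r (i + 1) • α k = α k + cartanA2 i k • (∑ l, α l - α i) := by
    rw [h.smul_smul_smul ne, sum_zmod_three α i,
      show cartanA2 (i + 1) k + cartanA2 (i + 2) k = -cartanA2 i k by
        linarith [cartanA2_add_add i k]]
    module
  have cartan_self : cartanA2 i i = 2 := if_pos rfl
  simp only [weylTranslation, mul_smul, h i j, smul_sub, smul_comm _ (cartanA2 i j)]
  rw [reflection, reflection, cartan_self]
  module

theorem zpow_weylTranslation_smul (h : ActsAsReflections r α) (i j : ZMod 3) (m : ℤ) :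
    weylTranslation r i ^ m • α j = α j - (m * cartanA2 i j) • ∑ l, α l := by
  have shift : weylTranslation r i • α j = α j + -(cartanA2 i j • ∑ l, α l) := by
    rw [h.weylTranslation_smul, sub_eq_add_neg]
  rw [zpow_smul_eq_add_zsmul shift
    (by rw [smul_neg, smul_comm, h.weylTranslation_smul_sum])]
  module

theorem zpow_mul_zpow_smul (h : ActsAsReflections r α) (i j k : ZMod 3) (m n : ℤ) :
    (weylTranslation r i ^ m * weylTranslation r j ^ n) • α k =
      α k - (m * cartanA2 i k + n * cartanA2 j k) • ∑ l, α l := by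
  have fixed : weylTranslation r i ^ m • ∑ l, α l = ∑ l, α l := by
    simpa using zpow_smul_eq_add_zsmul (x := ∑ l, α l) (d := 0)
      (by rw [h.weylTranslation_smul_sum, add_zero]) (smul_zero _) m
  rw [mul_smul, h.zpow_weylTranslation_smul, smul_sub, smul_comm, fixed,
    h.zpow_weylTranslation_smul]
  module

theorem exists_smul_eq_of_mem_closure_pair (h : ActsAsReflections r α) (hr : IsWeylA2Family r)
    {i j : ZMod 3} (hij : i ≠ j) {w : G} (hw : w ∈ Subgroup.closure {r i, r j}) :
    ∃ p q : ℤ, w • α i = p • α i + q • α j ∧ (p = 1 → q = 0 → w = 1) := by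
  have hi := h.smul_self i
  have hij' := h.smul_of_ne hij
  have hji' := h.smul_of_ne hij.symm
  obtain rfl | rfl | rfl | rfl | rfl | rfl :=
    mem_closure_pair_of_braid (hr.mul_self i) (hr.mul_self j) (hr.braid hij) hw
  · exact ⟨1, 0, by simp, by simp⟩
  · exact ⟨-1, 0, by simp [hi], by simp⟩
  · exact ⟨1, 1, by simp [hji'], by simp⟩
  · exact ⟨0, 1, by simp [mul_smul, hi, hij', hji'], by simp⟩
  · exact ⟨-1, -1, by simp [mul_smul, hi, hji', add_comm], by simp⟩
  · exact ⟨0, -1, by simp [mul_smul, hi, hij', hji'], by simp⟩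

theorem eq_one_of_smul_eq (h : ActsAsReflections r α) (hr : IsWeylA2Family r)
    (hgen : Subgroup.closure (Set.range r) = ⊤) (hα : LinearIndependent ℤ α) {g : G}
    (hg : ∀ j, g • α j = α j) : g = 1 := by
  have ne : (1 : ZMod 3) ≠ 2 := by decide
  have c11 : cartanA2 1 1 = 2 := rfl
  have c22 : cartanA2 2 2 = 2 := rfl
  have c12 : cartanA2 1 2 = -1 := rfl
  have c21 : cartanA2 2 1 = -1 := rfl
  obtain ⟨m, n, w, hw, rfl⟩ := hr.exists_eq_zpow_mul_zpow_mul hgen ne g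
  obtain ⟨p, q, hpq, eq_one⟩ := h.exists_smul_eq_of_mem_closure_pair hr ne hw
  have translate := h.zpow_mul_zpow_smul 1 2 (m := m) (n := n)
  have hg₁ := hg 1
  rw [mul_smul, hpq, smul_add, smul_comm _ p, smul_comm _ q, translate, translate, c11, c12, c21,
    c22] at hg₁
  obtain ⟨hp, hq, hδ₁⟩ := coeff_eq_zero_of_add_zsmul_sum hα ne (a := p - 1) (b := q)
    (c := -(p * (m * 2 + n * -1) + q * (m * -1 + n * 2)))
    (by rw [← sub_eq_zero.2 hg₁]; module)
  obtain rfl : p = 1 := by lia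
  obtain rfl := eq_one rfl hq
  have hg₂ := hg 2
  rw [mul_one, translate, c12, c22] at hg₂
  obtain ⟨-, -, hδ₂⟩ := coeff_eq_zero_of_add_zsmul_sum hα ne (a := 0) (b := 0)
    (c := -(m * -1 + n * 2)) (by rw [← sub_eq_zero.2 hg₂]; module)
  subst hq
  obtain rfl : m = 0 := by lia
  obtain rfl : n = 0 := by lia
  simp

end ActsAsReflections

section BraidIdentity

variable {F : Type*} [Field F]

/-- Both sides are in the shape in which `S (T (S p))` and `T (S (T p))` unfold in
`map_map_map_eq_of_reflections`, hence the unsimplified `-b + (a + b)`. -/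
theorem braid_identity {a b p q : F} (hp : p ≠ 0) (hq : q ≠ 0) (hq' : q + a / p ≠ 0)
    (hp' : p - b / q ≠ 0) :
    p - (b + a) / (q + a / p) = p - b / q - (-b + (a + b)) / (q + (a + b) / (p - b / q)) := by
  have hD : p * q + a ≠ 0 := fun h ↦ hq' (by field_simp; linear_combination h)
  have hE : p * q - b ≠ 0 := fun h ↦ hp' (by field_simp; linear_combination h)
  have e₁ : q + a / p = (p * q + a) / p := by field_simp
  have e₂ : q + (a + b) / (p - b / q) = q * (p * q + a) / (p * q - b) := by
    have e₃ : p - b / q = (p * q - b) / q := by field_simp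
    rw [e₃, div_div_eq_mul_div, add_div_eq_mul_add_div _ _ hE]
    ring
  rw [e₁, e₂]
  field_simp
  ring

theorem map_map_map_eq_of_reflections {S T : F →+* F} {a b p q : F} (hp : p ≠ 0) (hq : q ≠ 0)
    (Sb : S b = b + a) (Sp : S p = p) (Sq : S q = q + a / p)
    (Ta : T a = a + b) (Tb : T b = -b) (Tp : T p = p - b / q) (Tq : T q = q) :
    S (T (S p)) = T (S (T p)) := by
  have hq' : q + a / p ≠ 0 := Sq ▸ (map_ne_zero S).2 hq
  have hp' : p - b / q ≠ 0 := Tp ▸ (map_ne_zero T).2 hp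
  simpa only [map_sub, map_add, map_div₀, Sp, Tp, Sb, Sq, Ta, Tb, Tq] using
    braid_identity hp hq hq' hp'

end BraidIdentity

theorem algEquiv_ext_of_adjoin_eq_top {k F : Type*} [Field k] [Field F] [Algebra k F] {S : Set F}
    (hS : IntermediateField.adjoin k S = ⊤) {f g : F ≃ₐ[k] F} (h : ∀ x ∈ S, f x = g x) :
    f = g := by
  ext x
  have hx : x ∈ IntermediateField.adjoin k S := hS ▸ IntermediateField.mem_top
  induction hx using IntermediateField.adjoin_induction with
  | mem x hx => exact h x hx
  | algebraMap c => simp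
  | add x y _ _ hx hy => rw [map_add, map_add, hx, hy]
  | inv x _ hx => rw [map_inv₀, map_inv₀, hx]
  | mul x y _ _ hx hy => rw [map_mul, map_mul, hx, hy]

/-- The automorphisms `sᵢ` of `F` act on the parameters `αⱼ` and the unknowns `φⱼ` by the formulas
for the Bäcklund transformations of the symmetric form of the fourth Painlevé equation. -/
structure IsBacklundFamily {k F : Type*} [Field k] [Field F] [Algebra k F]
    (s : ZMod 3 → F ≃ₐ[k] F) (α φ : ZMod 3 → F) : Prop where
  map_param (i j : ZMod 3) : s i (α j) = α j - (cartanA2 i j : F) * α i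
  map_unknown (i j : ZMod 3) : s i (φ j) = φ j + (orientA2 i j : F) * (α i / φ i)

namespace IsBacklundFamily

variable {k F : Type*} [Field k] [Field F] [Algebra k F] {s : ZMod 3 → F ≃ₐ[k] F}
  {α φ : ZMod 3 → F}

theorem actsAsReflections (h : IsBacklundFamily s α φ) : ActsAsReflections s α := fun i j ↦ by
  rw [AlgEquiv.smul_def, h.map_param, zsmul_eq_mul]

theorem map_unknown_self (h : IsBacklundFamily s α φ) (i : ZMod 3) : s i (φ i) = φ i := by
  simp [h.map_unknown, orientA2]

theorem map_unknown_add_one (h : IsBacklundFamily s α φ) (i : ZMod 3) :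
    s i (φ (i + 1)) = φ (i + 1) + α i / φ i := by
  simp [h.map_unknown, orientA2]

theorem map_add_one_unknown (h : IsBacklundFamily s α φ) (i : ZMod 3) :
    s (i + 1) (φ i) = φ i - α (i + 1) / φ (i + 1) := by
  have orient : orientA2 (i + 1) i = -1 := by revert i; decide
  rw [h.map_unknown, orient]
  push_cast
  ring

theorem map_sum_unknown (h : IsBacklundFamily s α φ) (i : ZMod 3) :
    s i (∑ j, φ j) = ∑ j, φ j := by
  rw [map_sum]
  simp only [h.map_unknown, Finset.sum_add_distrib, ← Finset.sum_mul, ← Int.cast_sum,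
    sum_orientA2, Int.cast_zero, zero_mul, add_zero]

theorem map_map_unknown (h : IsBacklundFamily s α φ) (i j : ZMod 3) : s i (s i (φ j)) = φ j := by
  have hα : s i (α i) = -α i := h.actsAsReflections.smul_self i
  rw [h.map_unknown, map_add, map_mul, map_div₀, map_intCast, hα, h.map_unknown_self,
    h.map_unknown]
  ring

theorem braid_unknown (h : IsBacklundFamily s α φ) (hφ : ∀ i, φ i ≠ 0) (i j : ZMod 3) :
    s i (s (i + 1) (s i (φ j))) = s (i + 1) (s i (s (i + 1) (φ j))) := by
  have ne : i ≠ i + 1 := by simp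
  have reflect_self (l : ZMod 3) : s l (α l) = -α l := h.actsAsReflections.smul_self l
  have reflect_succ : s i (α (i + 1)) = α (i + 1) + α i := h.actsAsReflections.smul_of_ne ne
  have reflect_pred : s (i + 1) (α i) = α i + α (i + 1) := h.actsAsReflections.smul_of_ne ne.symm
  have on_self : s i (s (i + 1) (s i (φ i))) = s (i + 1) (s i (s (i + 1) (φ i))) :=
    map_map_map_eq_of_reflections (S := (s i : F →+* F)) (T := (s (i + 1) : F →+* F))
      (hφ i) (hφ (i + 1)) reflect_succ (h.map_unknown_self i) (h.map_unknown_add_one i)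
      reflect_pred (reflect_self _) (h.map_add_one_unknown i) (h.map_unknown_self _)
  have on_succ : s i (s (i + 1) (s i (φ (i + 1)))) = s (i + 1) (s i (s (i + 1) (φ (i + 1)))) := by
    refine (map_map_map_eq_of_reflections (S := (s (i + 1) : F →+* F)) (T := (s i : F →+* F))
      (a := α (i + 1)) (b := α i) (q := -φ i)
      (hφ (i + 1)) (neg_ne_zero.2 (hφ i)) reflect_pred (h.map_unknown_self _) ?_
      reflect_succ (reflect_self i) ?_ ?_).symm
    · rw [RingHom.coe_coe, map_neg, h.map_add_one_unknown]
      ring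
    · simp [h.map_unknown_add_one, div_neg]
    · simp [h.map_unknown_self]
  have on_sum : s i (s (i + 1) (s i (∑ l, φ l))) = s (i + 1) (s i (s (i + 1) (∑ l, φ l))) := by
    simp only [h.map_sum_unknown]
  obtain rfl | rfl | rfl := eq_or_eq_add_one_or_eq_add_two i j
  · exact on_self
  · exact on_succ
  · have last : φ (i + 2) = ∑ l, φ l - φ i - φ (i + 1) := by rw [sum_zmod_three φ i]; ring
    rw [last]
    simp only [map_sub] at on_self on_succ on_sum ⊢
    rw [on_self, on_succ, on_sum]

theorem isWeylA2Family (h : IsBacklundFamily s α φ) (hφ : ∀ i, φ i ≠ 0)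
    (hgen : IntermediateField.adjoin k (Set.range α ∪ Set.range φ) = ⊤) : IsWeylA2Family s := by
  have ext_gen {f g : F ≃ₐ[k] F} (hα : ∀ j, f (α j) = g (α j)) (hφ : ∀ j, f (φ j) = g (φ j)) :
      f = g := by
    refine algEquiv_ext_of_adjoin_eq_top hgen ?_
    rintro _ (⟨j, rfl⟩ | ⟨j, rfl⟩)
    exacts [hα j, hφ j]
  have braid_succ (i : ZMod 3) : s i * s (i + 1) * s i = s (i + 1) * s i * s (i + 1) :=
    ext_gen (h.actsAsReflections.smul_braid (by simp)) (h.braid_unknown hφ i)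
  refine ⟨fun i ↦ ext_gen (h.actsAsReflections.smul_smul_self i) (h.map_map_unknown i), ?_⟩
  intro i j hij
  obtain rfl | rfl : j = i + 1 ∨ i = j + 1 := by revert i j; decide
  exacts [braid_succ i, (braid_succ j).symm]

end IsBacklundFamily

theorem injective_of_actsAsReflections {G M : Type*} [Group G] [AddCommGroup M]
    [DistribMulAction G M] {α : ZMod 3 → M} (hα : LinearIndependent ℤ α) (f : WeylA2 →* G)
    (hf : ActsAsReflections (fun i ↦ f (PresentedGroup.of i)) α) : Function.Injective f := by
  let _ : DistribMulAction WeylA2 M := DistribMulAction.compHom M f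
  refine (injective_iff_map_eq_one f).2 fun g hg ↦ ?_
  have acts : ActsAsReflections (PresentedGroup.of : ZMod 3 → WeylA2) α := hf
  refine acts.eq_one_of_smul_eq isWeylA2Family_of (PresentedGroup.closure_range_of _) hα fun j ↦ ?_
  change f g • α j = α j
  rw [hg, one_smul]

theorem affine_Weyl_group_A2_faithful_realization_general {k F : Type*} [Field k] [Field F]
    [Algebra k F] {α φ : ZMod 3 → F} (hα : LinearIndependent ℤ α) (hφ : ∀ i, φ i ≠ 0)
    (hgen : IntermediateField.adjoin k (Set.range α ∪ Set.range φ) = ⊤)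
    {s : ZMod 3 → F ≃ₐ[k] F} (hs : IsBacklundFamily s α φ) :
    ∃ e : WeylA2 ≃* Subgroup.closure (Set.range s),
      ∀ i, (e (PresentedGroup.of i) : F ≃ₐ[k] F) = s i := by
  have rels := isWeylA2Family_iff_lift.1 (hs.isWeylA2Family hφ hgen)
  have map_of (i : ZMod 3) : PresentedGroup.toGroup rels (PresentedGroup.of i) = s i :=
    PresentedGroup.toGroup.of rels
  have inj : Function.Injective (PresentedGroup.toGroup rels) :=
    injective_of_actsAsReflections hα _ (by simpa only [map_of] using hs.actsAsReflections)
  exact ⟨(MonoidHom.ofInjective inj).trans (MulEquiv.subgroupCongr (range_toGroup rels)), map_of⟩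

theorem linearIndependent_αv : LinearIndependent ℤ αv := by
  have inj : Function.Injective (algebraMap PolyP4 KP4) := FaithfulSMul.algebraMap_injective _ _
  have indep : LinearIndependent ℂ αv :=
    ((linearIndependent_X (ZMod 3 ⊕ ZMod 3) ℂ).comp _ Sum.inl_injective).map'
      (IsScalarTower.toAlgHom ℂ PolyP4 KP4).toLinearMap (LinearMap.ker_eq_bot.2 inj)
  exact indep.restrict_scalars' ℤ

theorem φv_ne_zero (j : ZMod 3) : φv j ≠ 0 :=
  (map_ne_zero_iff _ (FaithfulSMul.algebraMap_injective PolyP4 KP4)).2 (X_ne_zero _)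

theorem adjoin_αv_φv : IntermediateField.adjoin ℂ (Set.range αv ∪ Set.range φv) = ⊤ := by
  have range_eq : (IsScalarTower.toAlgHom ℂ PolyP4 KP4).range =
      Algebra.adjoin ℂ (Set.range αv ∪ Set.range φv) := by
    rw [← Algebra.map_top, ← adjoin_range_X, AlgHom.map_adjoin, ← Set.range_comp]
    congr 1
    ext x
    simp [αv, φv]
  rw [← IsFractionRing.algHom_fieldRange_eq_of_comp_eq_of_range_eq (f := AlgHom.id ℂ KP4)
    (g := IsScalarTower.toAlgHom ℂ PolyP4 KP4) rfl range_eq]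
  exact AlgHom.fieldRange_eq_top.2 Function.surjective_id

/-- the subgroup of Aut(K) generated by s₀, s₁, s₂ is isomorphic
to the affine Weyl group W(A₂⁽¹⁾), by an isomorphism matching the simple
reflections with s₀, s₁, s₂; in particular the realization is faithful. -/
theorem affine_Weyl_group_A2_faithful_realization
    (s : ZMod 3 → (KP4 ≃ₐ[ℂ] KP4))
    (hsα : ∀ i j : ZMod 3, s i (αv j) = αv j - (cartanA2 i j : KP4) * αv i)
    (hsφ : ∀ i j : ZMod 3, s i (φv j) = φv j + (orientA2 i j : KP4) * (αv i / φv i)) :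
    ∃ e : WeylA2 ≃* Subgroup.closure {s 0, s 1, s 2},
      ∀ i : ZMod 3, (e (PresentedGroup.of i) : KP4 ≃ₐ[ℂ] KP4) = s i := by
  rw [← range_zmod_three s]
  exact affine_Weyl_group_A2_faithful_realization_general linearIndependent_αv φv_ne_zero
    adjoin_αv_φv ⟨hsα, hsφ⟩

end
end

section
/- The assignments sᵢ(aⱼ) = aⱼ·aᵢ^(−aᵢⱼ), sᵢ(fⱼ) = fⱼ·((aᵢ + fᵢ)/(1 + aᵢfᵢ))^(uᵢⱼ) (for i,j ∈ {0,1,2}) and π(aⱼ) = a_{j+1}, π(fⱼ) = f_{j+1} extend to field automorphisms s₀, s₁, s₂, π of L = ℂ(a₀,a₁,a₂,f₀,f₁,f₂), and these automorphisms satisfy the fundamental relations of the extended affine Weyl group of type A₂⁽¹⁾: sᵢ² = 1, (sᵢs_{i+1})³ = 1, and πsᵢ = s_{i+1}π for all i ∈ {0,1,2} (indices read modulo 3). Moreover each sᵢ and π fixes the element q = a₀a₁a₂. -/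
/-!
Multiplicative (q-difference) analogue of the birational realization of the
extended affine Weyl group of type A₂⁽¹⁾, underlying the fourth q-Painlevé
equation.  L = ℂ(a₀,a₁,a₂,f₀,f₁,f₂) is the fraction field of the polynomial
ring in six variables indexed by `ZMod 3 ⊕ ZMod 3` (`Sum.inl j` ↦ aⱼ,
`Sum.inr j` ↦ fⱼ).
-/

open MvPolynomial

noncomputable section

abbrev PolyQ := MvPolynomial (ZMod 3 ⊕ ZMod 3) ℂ

abbrev LQ := FractionRing PolyQ

/-- The multiplicative root parameters a₀, a₁, a₂. -/
def av (j : ZMod 3) : LQ := algebraMap PolyQ LQ (X (Sum.inl j))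

/-- The dependent variables f₀, f₁, f₂. -/
def fv (j : ZMod 3) : LQ := algebraMap PolyQ LQ (X (Sum.inr j))

/-!
Six algebraically independent generators of `K` over `F` are carried by a field automorphism to any
six generators of `K`, because six generators of a field of transcendence degree six are
algebraically independent. So each of the four assignments extends once its images are seen to
generate.

Put `Rᵢ = (aᵢ + fᵢ) / (1 + aᵢ fᵢ)`. Since `sᵢ aᵢ = aᵢ⁻¹` and `sᵢ fᵢ = fᵢ`, we have `sᵢ Rᵢ = Rᵢ⁻¹`,
which gives `sᵢ² = 1`. For `j ≠ i` the braid relation `sᵢ sⱼ sᵢ = sⱼ sᵢ sⱼ` comes down to the one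
identity `sᵢ sⱼ Rᵢ = sⱼ Rᵢ / Rᵢ`: with it, `sᵢ sⱼ sᵢ` sends `f_k` to
`f_k * (sⱼ Rᵢ) ^ u_{ik} * (sᵢ Rⱼ) ^ u_{jk}`, which is symmetric in `i` and `j`.
-/

section FreeGenerators

variable {F E ι : Type*} [Field F] [Field E] [Algebra F E] {x : ι → E}

lemma algebraicIndependent_of_adjoin_eq_top [Finite ι] {y : ι → E} (hx : AlgebraicIndependent F x)
    (hy : IntermediateField.adjoin F (Set.range y) = ⊤) : AlgebraicIndependent F y := by
  have : Algebra.IsAlgebraic (Algebra.adjoin F (Set.range y)) E := by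
    rw [← IntermediateField.isAlgebraic_adjoin_iff_top, hy]
    exact ⟨fun z => isAlgebraic_algebraMap (A := E) (⟨z, trivial⟩ : (⊤ : IntermediateField F E))⟩
  exact (Algebra.IsAlgebraic.isTranscendenceBasis_of_lift_le_trdeg_of_finite F y
    hx.lift_cardinalMk_le_trdeg).1

lemma exists_algEquiv_of_adjoin_eq_top {E' : Type*} [Field E'] [Algebra F E'] {y : ι → E'}
    (hx : AlgebraicIndependent F x) (hx_top : IntermediateField.adjoin F (Set.range x) = ⊤)
    (hy : AlgebraicIndependent F y) (hy_top : IntermediateField.adjoin F (Set.range y) = ⊤) :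
    ∃ e : E ≃ₐ[F] E', ∀ k, e (x k) = y k := by
  let ex := hx.aevalEquivField.trans
    ((IntermediateField.equivOfEq hx_top).trans IntermediateField.topEquiv)
  let ey := hy.aevalEquivField.trans
    ((IntermediateField.equivOfEq hy_top).trans IntermediateField.topEquiv)
  have hex (k : ι) : ex (algebraMap (MvPolynomial ι F) _ (X k)) = x k := by simp [ex]
  have hey (k : ι) : ey (algebraMap (MvPolynomial ι F) _ (X k)) = y k := by simp [ey]
  refine ⟨ex.symm.trans ey, fun k => ?_⟩
  rw [AlgEquiv.trans_apply, ← hex, AlgEquiv.symm_apply_apply, hey]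

lemma algEquiv_ext_of_adjoin_eq_top_s8 {E' : Type*} [Field E'] [Algebra F E'] {e₁ e₂ : E ≃ₐ[F] E'}
    (hx : IntermediateField.adjoin F (Set.range x) = ⊤) (h : ∀ k, e₁ (x k) = e₂ (x k)) :
    e₁ = e₂ := by
  have h_top : e₁.toAlgHom.comp (⊤ : IntermediateField F E).val =
      e₂.toAlgHom.comp (⊤ : IntermediateField F E).val :=
    IntermediateField.algHom_ext_of_eq_adjoin F hx.symm
      (by rintro _ ⟨k, rfl⟩; exact h k)
  exact AlgEquiv.ext fun z => DFunLike.congr_fun h_top ⟨z, trivial⟩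

lemma aeval_ne_zero_of_eval_ne_zero (hx : AlgebraicIndependent F x) {p : MvPolynomial ι F}
    (v : ι → F) (hp : eval v p ≠ 0) : aeval x p ≠ 0 :=
  (map_ne_zero_iff _ hx).2 fun h => hp (by rw [h, map_zero])

lemma adjoin_range_algebraMap_X_eq_top (ι F : Type*) [Field F] :
    IntermediateField.adjoin F (Set.range fun k : ι =>
      algebraMap (MvPolynomial ι F) (FractionRing (MvPolynomial ι F)) (X k)) = ⊤ := by
  let φ := IsScalarTower.toAlgHom F (MvPolynomial ι F) (FractionRing (MvPolynomial ι F))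
  have hφ : φ.range = Algebra.adjoin F (Set.range fun k => φ (X k)) := by
    rw [← Algebra.map_top, ← adjoin_range_X, AlgHom.map_adjoin, ← Set.range_comp]
    rfl
  calc IntermediateField.adjoin F (Set.range fun k => φ (X k))
      = (AlgHom.id F (FractionRing (MvPolynomial ι F))).fieldRange :=
        (IsFractionRing.algHom_fieldRange_eq_of_comp_eq_of_range_eq (g := φ) rfl hφ).symm
    _ = ⊤ := AlgHom.fieldRange_eq_top.2 Function.surjective_id

end FreeGenerators

lemma mul_pow_three_eq_one_of_braid {M : Type*} [Monoid M] {s t : M} (hs : s * s = 1)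
    (ht : t * t = 1) (hst : s * t * s = t * s * t) : (s * t) ^ 3 = 1 :=
  calc (s * t) ^ 3 = (s * t * s) * (t * s * t) := by
        simp only [pow_succ, pow_zero, one_mul, mul_assoc]
    _ = (s * t * s) * (s * t * s) := by rw [hst]
    _ = s * (t * (s * s) * t) * s := by simp only [mul_assoc]
    _ = 1 := by rw [hs, mul_one, ht, mul_one, hs]

section ReflectionFactor

variable {K : Type*} [Field K]

/-- The expression `(a + x) / (1 + a x)`. At `a = aᵢ`, `x = fᵢ` it is the factor by which `sᵢ`
multiplies `fᵢ₊₁` and divides `fᵢ₊₂`. -/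
def reflectionFactor (a x : K) : K := (a + x) / (1 + a * x)

lemma reflectionFactor_ne_zero {a x : K} (h_num : a + x ≠ 0) (h_den : 1 + a * x ≠ 0) :
    reflectionFactor a x ≠ 0 :=
  div_ne_zero h_num h_den

lemma inv_add_eq_div {a : K} (ha : a ≠ 0) (x : K) : a⁻¹ + x = (1 + a * x) / a := by
  field_simp

lemma one_add_inv_mul_eq_div {a : K} (ha : a ≠ 0) (x : K) : 1 + a⁻¹ * x = (a + x) / a := by
  field_simp

lemma reflectionFactor_inv_left {a : K} (ha : a ≠ 0) (x : K) :
    reflectionFactor a⁻¹ x = (reflectionFactor a x)⁻¹ := by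
  rw [reflectionFactor, reflectionFactor, inv_add_eq_div ha, one_add_inv_mul_eq_div ha,
    div_div_div_cancel_right₀ ha, inv_div]

lemma reflectionFactor_mul_right (c z : K) {p q : K} (hq : q ≠ 0) :
    reflectionFactor c (z * (p / q)) = (c * q + z * p) / (q + c * z * p) := by
  have h_num : c + z * (p / q) = (c * q + z * p) / q := by field_simp
  have h_den : 1 + c * (z * (p / q)) = (q + c * z * p) / q := by field_simp
  rw [reflectionFactor, h_num, h_den, div_div_div_cancel_right₀ hq]

lemma map_reflectionFactor {G : Type*} [FunLike G K K] [RingHomClass G K K] (S : G) (a x : K) :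
    S (reflectionFactor a x) = reflectionFactor (S a) (S x) := by
  simp only [reflectionFactor, map_div₀, map_add, map_one, map_mul]

lemma reflectionFactor_div_reflectionFactor {a b x y : K} (hax : 1 + a * x ≠ 0)
    (hby : b + y ≠ 0) (hab : a * b + y * reflectionFactor a x ≠ 0) :
    reflectionFactor b (x / reflectionFactor (a * b) (y * reflectionFactor a x)) =
      reflectionFactor (a * b) (x / reflectionFactor b y) / reflectionFactor a x := by
  set p := a * b * (1 + a * x) + y * (a + x) with hp
  set q := 1 + a * x + a * b * y * (a + x) with hq
  have hp_ne : p ≠ 0 := by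
    have : p = (a * b + y * reflectionFactor a x) * (1 + a * x) := by
      rw [reflectionFactor]; field_simp; rfl
    exact this ▸ mul_ne_zero hab hax
  have hpq : reflectionFactor (a * b) (y * reflectionFactor a x) = p / q :=
    reflectionFactor_mul_right _ _ hax
  calc reflectionFactor b (x / reflectionFactor (a * b) (y * reflectionFactor a x))
      = (b * p + x * q) / (p + b * x * q) := by
        rw [hpq, div_eq_mul_inv x, inv_div, reflectionFactor_mul_right _ _ hp_ne]
    _ = (a * b * (b + y) + x * (1 + b * y)) * (1 + a * x) /
          ((b + y + a * b * x * (1 + b * y)) * (a + x)) := by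
        rw [hp, hq]; congr 1 <;> ring
    _ = reflectionFactor (a * b) (x / reflectionFactor b y) / reflectionFactor a x := by
        rw [reflectionFactor.eq_1 b, div_eq_mul_inv x, inv_div,
          reflectionFactor_mul_right _ _ hby, reflectionFactor, div_div_div_eq]

lemma map_map_reflectionFactor {G : Type*} [FunLike G K K] [RingHomClass G K K] {S T : G}
    {a b x y : K} (ha : a ≠ 0) (hax : 1 + a * x ≠ 0) (hby : b + y ≠ 0)
    (hSa : S a = a⁻¹) (hSb : S b = a * b) (hSx : S x = x) (hSy : S y = y * reflectionFactor a x)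
    (hTa : T a = a * b) (hTx : T x = x / reflectionFactor b y) :
    S (T (reflectionFactor a x)) = T (reflectionFactor a x) / reflectionFactor a x := by
  have hab : a * b + y * reflectionFactor a x ≠ 0 := by
    rw [← hSb, ← hSy, ← map_add]
    exact (map_ne_zero S).2 hby
  calc S (T (reflectionFactor a x))
      = reflectionFactor b (x / reflectionFactor (a * b) (y * reflectionFactor a x)) := by
        rw [map_reflectionFactor, hTa, hTx, map_reflectionFactor, map_mul, map_div₀,
          map_reflectionFactor, hSa, hSb, hSx, hSy, inv_mul_cancel_left₀ ha]
    _ = T (reflectionFactor a x) / reflectionFactor a x := by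
        rw [reflectionFactor_div_reflectionFactor hax hby hab, map_reflectionFactor T, hTa, hTx]

end ReflectionFactor

section Cartan

lemma cartanA2_self (i : ZMod 3) : cartanA2 i i = 2 := if_pos rfl

lemma cartanA2_of_ne {i j : ZMod 3} (hij : i ≠ j) : cartanA2 i j = -1 := if_neg hij

lemma mul_zpow_neg_cartanA2_self {K : Type*} [Field K] {x : K} (hx : x ≠ 0) (i : ZMod 3) :
    x * x ^ (-cartanA2 i i) = x⁻¹ := by
  rw [cartanA2_self, ← zpow_one_add₀ hx, ← zpow_neg_one]
  rfl

lemma cartanA2_row_sum (i : ZMod 3) : cartanA2 i 0 + cartanA2 i 1 + cartanA2 i 2 = 0 := by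
  decide +revert

lemma cartanA2_add_one (i j : ZMod 3) : cartanA2 (i + 1) (j + 1) = cartanA2 i j := by
  decide +revert

lemma orientA2_self (i : ZMod 3) : orientA2 i i = 0 := if_pos rfl

lemma orientA2_succ_right (i : ZMod 3) : orientA2 i (i + 1) = 1 := by decide +revert

lemma orientA2_succ_left (i : ZMod 3) : orientA2 (i + 1) i = -1 := by decide +revert

lemma orientA2_add_one (i j : ZMod 3) : orientA2 (i + 1) (j + 1) = orientA2 i j := by
  decide +revert

end Cartan

variable {F K : Type*} [Field F] [Field K] [Algebra F K] {a f : ZMod 3 → K}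

/-- `s` acts on the variables `aⱼ`, `fⱼ` by the formulas for the simple reflection `sᵢ`. -/
structure IsSimpleReflection (a f : ZMod 3 → K) (i : ZMod 3) (s : K ≃ₐ[F] K) : Prop where
  map_a : ∀ j, s (a j) = a j * a i ^ (-cartanA2 i j)
  map_f : ∀ j, s (f j) = f j * reflectionFactor (a i) (f i) ^ orientA2 i j

/-- `π` shifts the variables `aⱼ`, `fⱼ` along the rotation `j ↦ j + 1` of the Dynkin diagram. -/
structure IsDiagramRotation (a f : ZMod 3 → K) (π : K ≃ₐ[F] K) : Prop where
  map_a : ∀ j, π (a j) = a (j + 1)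
  map_f : ∀ j, π (f j) = f (j + 1)

lemma algEquiv_ext_of_map_a_of_map_f {e₁ e₂ : K ≃ₐ[F] K}
    (h_top : IntermediateField.adjoin F (Set.range (Sum.elim a f)) = ⊤)
    (ha : ∀ j, e₁ (a j) = e₂ (a j)) (hf : ∀ j, e₁ (f j) = e₂ (f j)) : e₁ = e₂ :=
  algEquiv_ext_of_adjoin_eq_top_s8 h_top (Sum.forall.2 ⟨ha, hf⟩)

section Independence

variable (h_ind : AlgebraicIndependent F (Sum.elim a f))
include h_ind

lemma a_ne_zero (i : ZMod 3) : a i ≠ 0 := h_ind.ne_zero (.inl i)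

lemma a_add_f_ne_zero (i : ZMod 3) : a i + f i ≠ 0 := by
  have h := aeval_ne_zero_of_eval_ne_zero h_ind (p := X (.inl i) + X (.inr i))
    (Sum.elim 1 0) (by simp)
  rwa [map_add, aeval_X, aeval_X] at h

lemma one_add_a_mul_f_ne_zero (i : ZMod 3) : 1 + a i * f i ≠ 0 := by
  have h := aeval_ne_zero_of_eval_ne_zero h_ind (p := 1 + X (.inl i) * X (.inr i)) 0 (by simp)
  rwa [map_add, map_one, map_mul, aeval_X, aeval_X] at h

lemma reflectionFactor_a_f_ne_zero (i : ZMod 3) : reflectionFactor (a i) (f i) ≠ 0 :=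
  reflectionFactor_ne_zero (a_add_f_ne_zero h_ind i) (one_add_a_mul_f_ne_zero h_ind i)

end Independence

section Existence

lemma mem_of_mul_zpow_mem {L : IntermediateField F K} {x c : K} {n : ℤ} (hc : c ≠ 0)
    (hcL : c ∈ L) (h : x * c ^ n ∈ L) : x ∈ L := by
  rw [← mul_div_cancel_right₀ x (zpow_ne_zero n hc)]
  exact div_mem h (zpow_mem hcL n)

lemma adjoin_simpleReflection_eq_top (h_ind : AlgebraicIndependent F (Sum.elim a f))
    (h_top : IntermediateField.adjoin F (Set.range (Sum.elim a f)) = ⊤) (i : ZMod 3) :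
    IntermediateField.adjoin F (Set.range (Sum.elim
      (fun j => a j * a i ^ (-cartanA2 i j))
      (fun j => f j * reflectionFactor (a i) (f i) ^ orientA2 i j))) = ⊤ := by
  set L := IntermediateField.adjoin F (Set.range (Sum.elim
    (fun j => a j * a i ^ (-cartanA2 i j))
    (fun j => f j * reflectionFactor (a i) (f i) ^ orientA2 i j)))
  have ha (j : ZMod 3) : a j * a i ^ (-cartanA2 i j) ∈ L :=
    IntermediateField.subset_adjoin _ _ ⟨.inl j, rfl⟩
  have hf (j : ZMod 3) : f j * reflectionFactor (a i) (f i) ^ orientA2 i j ∈ L :=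
    IntermediateField.subset_adjoin _ _ ⟨.inr j, rfl⟩
  have hai : a i ∈ L :=
    inv_mem_iff.1 (mul_zpow_neg_cartanA2_self (a_ne_zero h_ind i) i ▸ ha i)
  have hfi : f i ∈ L := by simpa only [orientA2_self, zpow_zero, mul_one] using hf i
  have hri : reflectionFactor (a i) (f i) ∈ L :=
    div_mem (add_mem hai hfi) (add_mem (one_mem L) (mul_mem hai hfi))
  rw [eq_top_iff, ← h_top, IntermediateField.adjoin_le_iff, Set.range_subset_iff, Sum.forall]
  exact ⟨fun j => mem_of_mul_zpow_mem (a_ne_zero h_ind i) hai (ha j),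
    fun j => mem_of_mul_zpow_mem (reflectionFactor_a_f_ne_zero h_ind i) hri (hf j)⟩

lemma exists_isSimpleReflection (h_ind : AlgebraicIndependent F (Sum.elim a f))
    (h_top : IntermediateField.adjoin F (Set.range (Sum.elim a f)) = ⊤) (i : ZMod 3) :
    ∃ s : K ≃ₐ[F] K, IsSimpleReflection a f i s := by
  have hs_top := adjoin_simpleReflection_eq_top h_ind h_top i
  obtain ⟨s, hs⟩ := exists_algEquiv_of_adjoin_eq_top h_ind h_top
    (algebraicIndependent_of_adjoin_eq_top h_ind hs_top) hs_top
  exact ⟨s, fun j => hs (.inl j), fun j => hs (.inr j)⟩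

lemma exists_isDiagramRotation (h_ind : AlgebraicIndependent F (Sum.elim a f))
    (h_top : IntermediateField.adjoin F (Set.range (Sum.elim a f)) = ⊤) :
    ∃ π : K ≃ₐ[F] K, IsDiagramRotation a f π := by
  let ρ := (Equiv.addRight (1 : ZMod 3)).sumCongr (Equiv.addRight (1 : ZMod 3))
  obtain ⟨π, hπ⟩ := exists_algEquiv_of_adjoin_eq_top h_ind h_top (h_ind.comp ρ ρ.injective)
    (by rwa [EquivLike.range_comp])
  exact ⟨π, fun j => hπ (.inl j), fun j => hπ (.inr j)⟩

end Existence

namespace IsSimpleReflection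

variable {i j : ZMod 3} {s t : K ≃ₐ[F] K}

lemma map_a_self (hs : IsSimpleReflection a f i s) (hai : a i ≠ 0) : s (a i) = (a i)⁻¹ := by
  rw [hs.map_a, mul_zpow_neg_cartanA2_self hai]

lemma map_a_of_ne (hs : IsSimpleReflection a f i s) (hij : i ≠ j) : s (a j) = a i * a j := by
  rw [hs.map_a, cartanA2_of_ne hij, neg_neg, zpow_one, mul_comm]

lemma map_f_self (hs : IsSimpleReflection a f i s) : s (f i) = f i := by
  rw [hs.map_f, orientA2_self, zpow_zero, mul_one]

lemma map_reflectionFactor_self (hs : IsSimpleReflection a f i s) (hai : a i ≠ 0) :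
    s (reflectionFactor (a i) (f i)) = (reflectionFactor (a i) (f i))⁻¹ := by
  rw [map_reflectionFactor, hs.map_a_self hai, hs.map_f_self, reflectionFactor_inv_left hai]

lemma mul_self (hs : IsSimpleReflection a f i s) (h_ind : AlgebraicIndependent F (Sum.elim a f))
    (h_top : IntermediateField.adjoin F (Set.range (Sum.elim a f)) = ⊤) : s * s = 1 := by
  have hai := a_ne_zero h_ind i
  apply algEquiv_ext_of_map_a_of_map_f h_top <;> intro j <;>
    rw [AlgEquiv.mul_apply, AlgEquiv.one_apply]
  · rw [hs.map_a, map_mul, map_zpow₀, hs.map_a_self hai, hs.map_a, inv_zpow,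
      mul_inv_cancel_right₀ (zpow_ne_zero _ hai)]
  · rw [hs.map_f, map_mul, map_zpow₀, hs.map_reflectionFactor_self hai, hs.map_f, inv_zpow,
      mul_inv_cancel_right₀ (zpow_ne_zero _ (reflectionFactor_a_f_ne_zero h_ind i))]

lemma braid_map_a (hs : IsSimpleReflection a f i s) (ht : IsSimpleReflection a f j t)
    (hij : i ≠ j) (h_ne : ∀ k, a k ≠ 0) (k : ZMod 3) :
    s (t (s (a k))) = a k * (a i * a j) ^ (-(cartanA2 i k + cartanA2 j k)) := by
  have hst : s (t (a i)) = a j := by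
    rw [ht.map_a_of_ne hij.symm, map_mul, hs.map_a_self (h_ne i), hs.map_a_of_ne hij,
      mul_comm, inv_mul_cancel_left₀ (h_ne i)]
  rw [hs.map_a, map_mul, map_mul, map_zpow₀, map_zpow₀, hst, ht.map_a, map_mul, map_zpow₀,
    hs.map_a_of_ne hij, hs.map_a, neg_add, zpow_add₀ (mul_ne_zero (h_ne i) (h_ne j)),
    mul_zpow, mul_zpow]
  ring

lemma braid_map_f (hs : IsSimpleReflection a f i s) (ht : IsSimpleReflection a f j t)
    (h_ne : reflectionFactor (a i) (f i) ≠ 0)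
    (hst : s (t (reflectionFactor (a i) (f i))) =
      t (reflectionFactor (a i) (f i)) / reflectionFactor (a i) (f i)) (k : ZMod 3) :
    s (t (s (f k))) = f k * t (reflectionFactor (a i) (f i)) ^ orientA2 i k *
      s (reflectionFactor (a j) (f j)) ^ orientA2 j k := by
  rw [hs.map_f, map_mul, map_mul, map_zpow₀, map_zpow₀, hst, ht.map_f, map_mul, map_zpow₀,
    hs.map_f, div_zpow]
  field_simp

lemma map_map_reflectionFactor_succ (hs : IsSimpleReflection a f i s)
    (ht : IsSimpleReflection a f (i + 1) t) (h_ind : AlgebraicIndependent F (Sum.elim a f)) :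
    s (t (reflectionFactor (a i) (f i))) =
      t (reflectionFactor (a i) (f i)) / reflectionFactor (a i) (f i) := by
  have hi : i ≠ i + 1 := by simp
  refine map_map_reflectionFactor (a_ne_zero h_ind i) (one_add_a_mul_f_ne_zero h_ind i)
    (a_add_f_ne_zero h_ind (i + 1)) (hs.map_a_self (a_ne_zero h_ind i)) (hs.map_a_of_ne hi)
    hs.map_f_self ?_ ?_ ?_
  · rw [hs.map_f, orientA2_succ_right, zpow_one]
  · rw [ht.map_a_of_ne hi.symm, mul_comm]
  · rw [ht.map_f, orientA2_succ_left, zpow_neg_one, div_eq_mul_inv]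

-- Inverting the parameters `a` inverts every reflection factor, hence reverses the orientation.
lemma map_map_reflectionFactor_pred (hs : IsSimpleReflection a f i s)
    (ht : IsSimpleReflection a f (i + 1) t) (h_ind : AlgebraicIndependent F (Sum.elim a f)) :
    t (s (reflectionFactor (a (i + 1)) (f (i + 1)))) =
      s (reflectionFactor (a (i + 1)) (f (i + 1))) / reflectionFactor (a (i + 1)) (f (i + 1)) := by
  have hi : i ≠ i + 1 := by simp
  have hai := a_ne_zero h_ind i
  have haj := a_ne_zero h_ind (i + 1)
  have h_inv := map_map_reflectionFactor (S := t) (T := s) (a := (a (i + 1))⁻¹) (b := (a i)⁻¹)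
    (x := f (i + 1)) (y := f i) (inv_ne_zero haj) ?_ ?_ ?_ ?_ ht.map_f_self ?_ ?_ ?_
  · rwa [reflectionFactor_inv_left haj, map_inv₀, map_inv₀, inv_div_inv, ← inv_div, inv_inj]
      at h_inv
  · rw [one_add_inv_mul_eq_div haj]
    exact div_ne_zero (a_add_f_ne_zero h_ind (i + 1)) haj
  · rw [inv_add_eq_div hai]
    exact div_ne_zero (one_add_a_mul_f_ne_zero h_ind i) hai
  · rw [map_inv₀, ht.map_a_self haj]
  · rw [map_inv₀, ht.map_a_of_ne hi.symm, mul_inv]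
  · rw [ht.map_f, orientA2_succ_left, zpow_neg_one, reflectionFactor_inv_left haj]
  · rw [map_inv₀, hs.map_a_of_ne hi, mul_inv_rev]
  · rw [hs.map_f, orientA2_succ_right, zpow_one, reflectionFactor_inv_left hai, div_inv_eq_mul]

lemma braid (hs : IsSimpleReflection a f i s) (ht : IsSimpleReflection a f (i + 1) t)
    (h_ind : AlgebraicIndependent F (Sum.elim a f))
    (h_top : IntermediateField.adjoin F (Set.range (Sum.elim a f)) = ⊤) :
    s * t * s = t * s * t := by
  have hi : i ≠ i + 1 := by simp
  apply algEquiv_ext_of_map_a_of_map_f h_top <;> intro k <;> simp only [AlgEquiv.mul_apply]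
  · rw [hs.braid_map_a ht hi (a_ne_zero h_ind), ht.braid_map_a hs hi.symm (a_ne_zero h_ind),
      mul_comm (a i), add_comm (cartanA2 i k)]
  · rw [hs.braid_map_f ht (reflectionFactor_a_f_ne_zero h_ind i)
        (hs.map_map_reflectionFactor_succ ht h_ind),
      ht.braid_map_f hs (reflectionFactor_a_f_ne_zero h_ind (i + 1))
        (hs.map_map_reflectionFactor_pred ht h_ind), mul_right_comm]

lemma map_q (hs : IsSimpleReflection a f i s) (hai : a i ≠ 0) :
    s (a 0 * a 1 * a 2) = a 0 * a 1 * a 2 := by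
  calc s (a 0 * a 1 * a 2)
      = a 0 * a 1 * a 2 *
          (a i ^ (-cartanA2 i 0) * a i ^ (-cartanA2 i 1) * a i ^ (-cartanA2 i 2)) := by
        rw [map_mul, map_mul, hs.map_a, hs.map_a, hs.map_a]; ring
    _ = a 0 * a 1 * a 2 := by
        rw [← zpow_add₀ hai, ← zpow_add₀ hai, ← neg_add, ← neg_add, cartanA2_row_sum, neg_zero,
          zpow_zero, mul_one]

end IsSimpleReflection

namespace IsDiagramRotation

variable {π : K ≃ₐ[F] K}

lemma mul_simpleReflection {i : ZMod 3} {s t : K ≃ₐ[F] K} (hπ : IsDiagramRotation a f π)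
    (hs : IsSimpleReflection a f i s) (ht : IsSimpleReflection a f (i + 1) t)
    (h_top : IntermediateField.adjoin F (Set.range (Sum.elim a f)) = ⊤) : π * s = t * π := by
  apply algEquiv_ext_of_map_a_of_map_f h_top <;> intro j <;> simp only [AlgEquiv.mul_apply]
  · rw [hs.map_a, map_mul, map_zpow₀, hπ.map_a, hπ.map_a, ht.map_a, cartanA2_add_one]
  · rw [hs.map_f, map_mul, map_zpow₀, map_reflectionFactor, hπ.map_a, hπ.map_f, hπ.map_f, ht.map_f,
      orientA2_add_one]

lemma map_q (hπ : IsDiagramRotation a f π) : π (a 0 * a 1 * a 2) = a 0 * a 1 * a 2 := by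
  have h₁₂ : (1 : ZMod 3) + 1 = 2 := rfl
  have h₂₀ : (2 : ZMod 3) + 1 = 0 := rfl
  rw [map_mul, map_mul, hπ.map_a, hπ.map_a, hπ.map_a, zero_add, h₁₂, h₂₀]
  ring

end IsDiagramRotation

theorem extended_affine_Weyl_A2_multiplicative_realization_general
    (h_ind : AlgebraicIndependent F (Sum.elim a f))
    (h_top : IntermediateField.adjoin F (Set.range (Sum.elim a f)) = ⊤) :
    ∃ (s : ZMod 3 → (K ≃ₐ[F] K)) (π : K ≃ₐ[F] K),
      (∀ i j : ZMod 3, s i (a j) = a j * a i ^ (-(cartanA2 i j))) ∧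
      (∀ i j : ZMod 3,
        s i (f j) = f j * ((a i + f i) / (1 + a i * f i)) ^ (orientA2 i j)) ∧
      (∀ j : ZMod 3, π (a j) = a (j + 1)) ∧
      (∀ j : ZMod 3, π (f j) = f (j + 1)) ∧
      (∀ i : ZMod 3, s i * s i = 1) ∧
      (∀ i : ZMod 3, (s i * s (i + 1)) ^ 3 = 1) ∧
      (∀ i : ZMod 3, π * s i = s (i + 1) * π) ∧
      (∀ i : ZMod 3, s i (a 0 * a 1 * a 2) = a 0 * a 1 * a 2) ∧
      π (a 0 * a 1 * a 2) = a 0 * a 1 * a 2 := by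
  choose s hs using exists_isSimpleReflection h_ind h_top
  obtain ⟨π, hπ⟩ := exists_isDiagramRotation h_ind h_top
  have h_inv (i : ZMod 3) : s i * s i = 1 := (hs i).mul_self h_ind h_top
  have h_braid (i : ZMod 3) := (hs i).braid (hs (i + 1)) h_ind h_top
  exact ⟨s, π, fun i => (hs i).map_a, fun i => (hs i).map_f, hπ.map_a, hπ.map_f, h_inv,
    fun i => mul_pow_three_eq_one_of_braid (h_inv i) (h_inv (i + 1)) (h_braid i),
    fun i => hπ.mul_simpleReflection (hs i) (hs (i + 1)) h_top,
    fun i => (hs i).map_q (a_ne_zero h_ind i), hπ.map_q⟩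

lemma sumElim_av_fv :
    Sum.elim av fv = fun k : ZMod 3 ⊕ ZMod 3 => algebraMap PolyQ LQ (X k) :=
  funext (Sum.forall.2 ⟨fun _ => rfl, fun _ => rfl⟩)

lemma algebraicIndependent_av_fv : AlgebraicIndependent ℂ (Sum.elim av fv) :=
  sumElim_av_fv ▸ (algebraicIndependent_X (ZMod 3 ⊕ ZMod 3) ℂ).map'
    (f := IsScalarTower.toAlgHom ℂ PolyQ LQ) (IsFractionRing.injective PolyQ LQ)

lemma adjoin_av_fv_eq_top : IntermediateField.adjoin ℂ (Set.range (Sum.elim av fv)) = ⊤ :=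
  sumElim_av_fv ▸ adjoin_range_algebraMap_X_eq_top (ZMod 3 ⊕ ZMod 3) ℂ

/-- the assignments sᵢ(aⱼ) = aⱼ·aᵢ^(−aᵢⱼ),
sᵢ(fⱼ) = fⱼ·((aᵢ+fᵢ)/(1+aᵢfᵢ))^(uᵢⱼ), π(aⱼ) = a_{j+1}, π(fⱼ) = f_{j+1}
extend to automorphisms of L = ℂ(a₀,a₁,a₂,f₀,f₁,f₂) satisfying the
fundamental relations sᵢ² = 1, (sᵢs_{i+1})³ = 1, πsᵢ = s_{i+1}π of the
extended affine Weyl group of type A₂⁽¹⁾, and each of them fixes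
q = a₀a₁a₂. -/
theorem extended_affine_Weyl_A2_multiplicative_realization :
    ∃ (s : ZMod 3 → (LQ ≃ₐ[ℂ] LQ)) (π : LQ ≃ₐ[ℂ] LQ),
      (∀ i j : ZMod 3, s i (av j) = av j * av i ^ (-(cartanA2 i j))) ∧
      (∀ i j : ZMod 3,
        s i (fv j) = fv j * ((av i + fv i) / (1 + av i * fv i)) ^ (orientA2 i j)) ∧
      (∀ j : ZMod 3, π (av j) = av (j + 1)) ∧
      (∀ j : ZMod 3, π (fv j) = fv (j + 1)) ∧
      (∀ i : ZMod 3, s i * s i = 1) ∧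
      (∀ i : ZMod 3, (s i * s (i + 1)) ^ 3 = 1) ∧
      (∀ i : ZMod 3, π * s i = s (i + 1) * π) ∧
      (∀ i : ZMod 3, s i (av 0 * av 1 * av 2) = av 0 * av 1 * av 2) ∧
      π (av 0 * av 1 * av 2) = av 0 * av 1 * av 2 := by
  exact extended_affine_Weyl_A2_multiplicative_realization_general algebraicIndependent_av_fv
    adjoin_av_fv_eq_top

end
end
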